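/- Let 𝒫 = (P, μ, σ) be an n-dimensional system and for T ≥ 0 let u_T^can denote the μ-canonical distribution of temperature T. Then the function T ↦ F_𝒫(T, u_T^can) is increasing and concave on [0,∞), the functions T ↦ U_𝒫(u_T^can) and T ↦ S_𝒫(u_T^can) are increasing on [0,∞), and lim_{T→∞} S_𝒫(u_T^can) = 0. -/

import Mathlib

open MeasureTheory Filter Topology
open scoped ENNReal NNReal

noncomputable section

abbrev Euc (n : ℕ) := EuclideanSpace ℝ (Fin n)

/-- A `[0,∞]`-valued function on a set `K ⊆ ℝⁿ` is convex if
`u((1−t)x+ty) ≤ (1−t)u(x)+t·u(y)` in `[0,∞]` for all `x, y ∈ K` and `t ∈ [0,1]`. -/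
def ConvexFnOn {n : ℕ} (K : Set (Euc n)) (u : Euc n → ℝ≥0∞) : Prop :=
  ∀ ⦃x⦄, x ∈ K → ∀ ⦃y⦄, y ∈ K → ∀ ⦃t : ℝ⦄, 0 ≤ t → t ≤ 1 →
    u ((1 - t) • x + t • y) ≤ ENNReal.ofReal (1 - t) * u x + ENNReal.ofReal t * u y

/-- A polytope: a compact set with nonempty interior which is a finite
intersection of closed half-spaces (cut out by nonzero affine functions). -/
def IsPolytope {n : ℕ} (P : Set (Euc n)) : Prop :=
  IsCompact P ∧ (interior P).Nonempty ∧
    ∃ (m : ℕ) (L : Fin m → (Euc n →ᵃ[ℝ] ℝ)),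
      (∀ k, L k ≠ 0) ∧ P = ⋂ k, {x | 0 ≤ L k x}

/-- `F` is a face of `P`: the intersection of `P` with the zero locus of a
nonzero affine function that is nonnegative on `P`. -/
def IsFaceOf {n : ℕ} (P F : Set (Euc n)) : Prop :=
  ∃ ℓ : Euc n →ᵃ[ℝ] ℝ, ℓ ≠ 0 ∧ (∀ y ∈ P, 0 ≤ ℓ y) ∧ F = {y ∈ P | ℓ y = 0}

/-- A facet: a face spanning an affine subspace of dimension `n − 1`. -/
def IsFacetOf {n : ℕ} (P F : Set (Euc n)) : Prop :=
  IsFaceOf P F ∧ Module.finrank ℝ (vectorSpan ℝ F) + 1 = n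

/-- A simple polytope: every vertex lies on exactly `n` facets. -/
def IsSimplePolytope {n : ℕ} (P : Set (Euc n)) : Prop :=
  IsPolytope P ∧ ∀ v : Euc n, IsFaceOf P {v} →
    {F : Set (Euc n) | IsFacetOf P F ∧ v ∈ F}.ncard = n

/-- An `n`-dimensional system `𝒫 = (P, μ, σ)`: a simple polytope `P ⊆ ℝⁿ`, a flat
measure `μ` on `P` (a positive constant multiple of Lebesgue measure restricted
to `P`), and a flat measure `σ` on `∂P` (supported on the boundary and, on each
facet, a positive constant multiple of `(n−1)`-dimensional Hausdorff measure). -/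
structure NSystem (n : ℕ) where
  P : Set (Euc n)
  μ : Measure (Euc n)
  σ : Measure (Euc n)
  simple : IsSimplePolytope P
  flat : ∃ c : ℝ, 0 < c ∧ μ = ENNReal.ofReal c • volume.restrict P
  bdry_supp : σ (frontier P)ᶜ = 0
  flat_bdry : ∀ F : Set (Euc n), IsFacetOf P F →
    ∃ c : ℝ, 0 < c ∧ σ.restrict F =
      ENNReal.ofReal c • (Measure.hausdorffMeasure ((n : ℝ) - 1)).restrict F

/-- `y log y`, computed via the real value of `y ∈ [0,∞]`. -/
def xlogx (y : ℝ≥0∞) : ℝ := y.toReal * Real.log y.toReal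

/-- `∫_A u log u dμ ∈ (−∞, ∞]`, as an extended real number. -/
def entOn {n : ℕ} (μ : Measure (Euc n)) (A : Set (Euc n)) (u : Euc n → ℝ≥0∞) : EReal :=
  ((∫⁻ x in A, ENNReal.ofReal (xlogx (u x)) ∂μ : ℝ≥0∞) : EReal)
    - ((∫⁻ x in A, ENNReal.ofReal (-(xlogx (u x))) ∂μ : ℝ≥0∞) : EReal)

/-- `u : P → (0,∞]` is log-convex: `u((1−t)x+ty) ≤ u(x)^{1−t} u(y)^t`. -/
def LogConvexOn {n : ℕ} (P : Set (Euc n)) (u : Euc n → ℝ≥0∞) : Prop :=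
  ∀ ⦃x⦄, x ∈ P → ∀ ⦃y⦄, y ∈ P → ∀ ⦃t : ℝ⦄, 0 ≤ t → t ≤ 1 →
    u ((1 - t) • x + t • y) ≤ u x ^ (1 - t) * u y ^ t

/-- `ℳ^{exp,p}(P)`: lower semi-continuous log-convex `u : P → (0,∞]` with
`∫_P u dμ = μ(P)` and `∫_P u^p dμ < ∞`. -/
def MExp {n : ℕ} (S : NSystem n) (p : ℝ) : Set (Euc n → ℝ≥0∞) :=
  {u | LowerSemicontinuousOn u S.P ∧ (∀ x ∈ S.P, 0 < u x) ∧ LogConvexOn S.P u ∧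
    (∫⁻ x in S.P, u x ∂S.μ) = S.μ S.P ∧ (∫⁻ x in S.P, u x ^ p ∂S.μ) < ⊤}

/-- The nonequilibrium entropy `S_𝒫(u) = −(1/μ(P)) ∫_P u log u dμ ∈ [−∞, 0]`. -/
def Spf {n : ℕ} (S : NSystem n) (u : Euc n → ℝ≥0∞) : EReal :=
  (((S.μ S.P).toReal⁻¹ : ℝ) : EReal) *
    (((∫⁻ x in S.P, ENNReal.ofReal (-(xlogx (u x))) ∂S.μ : ℝ≥0∞) : EReal)
      - ((∫⁻ x in S.P, ENNReal.ofReal (xlogx (u x)) ∂S.μ : ℝ≥0∞) : EReal))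

/-- The internal μ-energy `U_𝒫(u) = (1/μ(P)) ∫_{∂P} u dσ ∈ (0, ∞]`. -/
def Upf {n : ℕ} (S : NSystem n) (u : Euc n → ℝ≥0∞) : ℝ≥0∞ :=
  (S.μ S.P)⁻¹ * ∫⁻ x in frontier S.P, u x ∂S.σ

/-- The free μ-energy `F_𝒫(T,u) = U_𝒫(u) − T·S_𝒫(u)` if `S_𝒫(u) > −∞`, else `∞`. -/
def Fpf {n : ℕ} (S : NSystem n) (T : ℝ) (u : Euc n → ℝ≥0∞) : EReal :=
  if Spf S u = ⊥ then ⊤ else (Upf S u : EReal) - (T : EReal) * Spf S u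

/-- `u` is the μ-canonical distribution of temperature `T ≥ 0`: for `T > 0` the
minimizer of `F_𝒫(T,·)` on `ℳ^{exp,1}(P)`; for `T = 0` the minimizer of `U_𝒫`
maximizing `S_𝒫` among all minimizers of `U_𝒫`. -/
def IsCanonical {n : ℕ} (S : NSystem n) (T : ℝ) (u : Euc n → ℝ≥0∞) : Prop :=
  u ∈ MExp S 1 ∧
  (0 < T → ∀ u' ∈ MExp S 1, Fpf S T u ≤ Fpf S T u') ∧
  (T = 0 → (∀ u' ∈ MExp S 1, Upf S u ≤ Upf S u') ∧
    ∀ u' ∈ MExp S 1, (∀ u'' ∈ MExp S 1, Upf S u' ≤ Upf S u'') → Spf S u' ≤ Spf S u)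


lemma aff_add {n : ℕ} (l : Euc n →ᵃ[ℝ] ℝ) (x v : Euc n) : l (x + v) = l x + l.linear v := by
  have := l.map_vadd x v
  simp only [vadd_eq_add] at this
  rw [add_comm, this, add_comm]

lemma aff_pos {n : ℕ} {P : Set (Euc n)} (l : Euc n →ᵃ[ℝ] ℝ) (hl : l ≠ 0)
    (hp : ∀ y ∈ P, 0 ≤ l y) {x : Euc n} (hx : x ∈ interior P) : 0 < l x := by
  have hxP := interior_subset hx
  rcases (hp x hxP).lt_or_eq with h | h
  · exact h
  exfalso
  have hlin : ∀ v, 0 ≤ l.linear v := by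
    intro v
    have hc : Continuous (fun e : ℝ => x + e • v) := by fun_prop
    have h1 : ∀ᶠ e : ℝ in 𝓝 0, x + e • v ∈ interior P :=
      hc.continuousAt.eventually_mem (by simpa using isOpen_interior.mem_nhds hx)
    have h2 : ∀ᶠ e : ℝ in 𝓝[>] 0, x + e • v ∈ interior P := h1.filter_mono nhdsWithin_le_nhds
    obtain ⟨e, he, he0⟩ := (h2.and self_mem_nhdsWithin).exists
    have h3 := hp _ (interior_subset he)
    rw [aff_add, ← h, zero_add, map_smul, smul_eq_mul] at h3
    exact (mul_nonneg_iff_of_pos_left he0).1 h3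
  apply hl
  ext y
  have h4 := aff_add l x (y - x)
  have h5 := hlin (y - x)
  have h6 := hlin (-(y - x))
  rw [map_neg] at h6
  rw [add_sub_cancel, ← h] at h4
  have : l.linear (y - x) = 0 := by linarith
  rw [h4, this]; simp

lemma exists_facets {n : ℕ} {P : Set (Euc n)} (hP : IsPolytope P) :
    ∃ K : Finset (Euc n →ᵃ[ℝ] ℝ),
      (∀ l ∈ K, IsFacetOf P {y ∈ P | l y = 0} ∧ (∀ x ∈ interior P, 0 < l x) ∧ l.linear ≠ 0) ∧
      (∀ y ∈ frontier P, ∃ l ∈ K, l y = 0) := by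
  classical
  obtain ⟨hcpt, ⟨x0, hx0⟩, m, L, hL0, hPL⟩ := hP
  let A : Set (Finset (Euc n →ᵃ[ℝ] ℝ)) :=
    {K | (∀ l ∈ K, l ≠ 0) ∧ ∀ x, x ∈ P ↔ ∀ l ∈ K, 0 ≤ l x}
  have hA : A.Nonempty := by
    refine ⟨Finset.univ.image L, ?_, ?_⟩
    · intro l hl
      obtain ⟨k, -, rfl⟩ := Finset.mem_image.1 hl
      exact hL0 k
    · intro x
      rw [hPL]
      simp
  obtain ⟨K, ⟨hK0, hKP⟩, hKmin⟩ :=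
    (wellFounded_lt : WellFounded ((· < ·) : Finset (Euc n →ᵃ[ℝ] ℝ) → _ → Prop)).has_min A hA
  have hpos : ∀ l ∈ K, ∀ x ∈ interior P, 0 < l x := fun l hl x hx =>
    aff_pos l (hK0 l hl) (fun y hy => (hKP y).1 hy l hl) hx
  have hcont : ∀ l : Euc n →ᵃ[ℝ] ℝ, Continuous l := fun l => l.continuous_of_finiteDimensional
  refine ⟨K, ?_, ?_⟩
  · intro l hl
    have hz : ∃ z, l z < 0 ∧ ∀ j ∈ K.erase l, 0 ≤ j z := by
      by_contra! hcon
      refine hKmin (K.erase l) ⟨fun j hj => hK0 j (Finset.mem_of_mem_erase hj), ?_⟩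
        (Finset.erase_ssubset hl)
      intro x
      rw [hKP]
      refine ⟨fun h j hj => h j (Finset.mem_of_mem_erase hj), fun h => ?_⟩
      intro j hj
      by_cases hjl : j = l
      · subst hjl
        by_contra! hneg
        obtain ⟨j', hj', hj''⟩ := hcon x hneg
        exact absurd (h j' hj') (not_le.2 hj'')
      · exact h j (Finset.mem_erase.2 ⟨hjl, hj⟩)
    obtain ⟨z, hz0, hz1⟩ := hz
    have hlx0 := hpos l hl x0 hx0
    have hlin : l.linear ≠ 0 := by
      intro h
      have := aff_add l x0 (z - x0)
      rw [h, add_sub_cancel] at this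
      simp at this
      linarith
    refine ⟨⟨⟨l, hK0 l hl, fun y hy => (hKP y).1 hy l hl, rfl⟩, ?_⟩, hpos l hl, hlin⟩
    -- the point w
    have hd : 0 < l x0 - l z := by linarith
    set t : ℝ := l x0 / (l x0 - l z) with ht
    have ht0 : 0 < t := by positivity
    have ht1 : t < 1 := by rw [ht, div_lt_one hd]; linarith
    set w : Euc n := x0 + t • (z - x0) with hw
    have hval : ∀ j : Euc n →ᵃ[ℝ] ℝ, j w = (1 - t) * j x0 + t * j z := by
      intro j
      have h1 := aff_add j x0 (z - x0)
      rw [add_sub_cancel] at h1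
      rw [hw, aff_add, map_smul, smul_eq_mul, h1]
      ring
    have hlw : l w = 0 := by
      rw [hval, ht]; field_simp; ring
    have hjw : ∀ j ∈ K.erase l, 0 < j w := by
      intro j hj
      rw [hval]
      have := hpos j (Finset.mem_of_mem_erase hj) x0 hx0
      have := hz1 j hj
      have : 0 < (1 - t) * j x0 := mul_pos (by linarith) (by assumption)
      have : 0 ≤ t * j z := by positivity
      linarith
    have hspan : vectorSpan ℝ {y ∈ P | l y = 0} = LinearMap.ker l.linear := by
      apply le_antisymm
      · rw [vectorSpan_def, Submodule.span_le]
        rintro v ⟨a, ha, b, hb, rfl⟩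
        have := aff_add l b (a - b)
        rw [add_sub_cancel, ha.2, hb.2, zero_add] at this
        simpa using this.symm
      · intro v hv
        rw [LinearMap.mem_ker] at hv
        have h1 : ∀ᶠ e : ℝ in 𝓝 0, ∀ j ∈ K.erase l, 0 < j (w + e • v) := by
          rw [Filter.eventually_all_finset]
          intro j hj
          have hc : Continuous (fun e : ℝ => j (w + e • v)) := (hcont j).comp (by fun_prop)
          exact (hc.tendsto' 0 (j w) (by simp)).eventually (lt_mem_nhds (hjw j hj))
        have h2 : ∀ᶠ e : ℝ in 𝓝[>] 0, ∀ j ∈ K.erase l, 0 < j (w + e • v) :=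
          h1.filter_mono nhdsWithin_le_nhds
        obtain ⟨e, he, he0⟩ := (h2.and self_mem_nhdsWithin).exists
        have hmem : ∀ y, l y = 0 → (∀ j ∈ K.erase l, 0 < j y) → y ∈ {y ∈ P | l y = 0} := by
          intro y hy hj
          refine ⟨(hKP y).2 fun j hjK => ?_, hy⟩
          by_cases hjl : j = l
          · rw [hjl, hy]
          · exact (hj j (Finset.mem_erase.2 ⟨hjl, hjK⟩)).le
        have h3 := vsub_mem_vectorSpan ℝ (hmem (w + e • v) (by rw [aff_add, map_smul, hv, hlw]; simp) he)
          (hmem w hlw hjw)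
        have h4 : (w + e • v) -ᵥ w = e • v := by simp
        rw [h4] at h3
        exact (Submodule.smul_mem_iff _ (ne_of_gt he0)).1 h3
    rw [hspan]
    have h1 := l.linear.finrank_range_add_finrank_ker
    have h2 : LinearMap.range l.linear = ⊤ := LinearMap.range_eq_top.2 (LinearMap.surjective hlin)
    rw [h2, finrank_top] at h1
    simp at h1
    omega
  · intro y hy
    have hyP : y ∈ P := hcpt.isClosed.frontier_subset hy
    by_contra! hcon
    apply hy.2
    have h1 : ∀ᶠ x in 𝓝 y, ∀ j ∈ K, 0 < j x := by
      rw [Filter.eventually_all_finset]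
      intro j hj
      exact (hcont j).continuousAt.eventually_mem
        (Ioi_mem_nhds (lt_of_le_of_ne ((hKP y).1 hyP j hj) (hcon j hj).symm))
    rw [mem_interior_iff_mem_nhds]
    filter_upwards [h1] with x hx
    exact (hKP x).2 fun j hj => (hx j hj).le

def eB {n : ℕ} (i : Fin n) : Euc n := EuclideanSpace.single i 1

/-- projection forgetting the coordinate `i` -/
def prj {m : ℕ} (i : Fin (m + 1)) (x : Euc (m + 1)) : Fin m → ℝ := fun j => x (i.succAbove j)

lemma prj_lip {m : ℕ} (i : Fin (m + 1)) : LipschitzWith 1 (prj i) := by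
  apply LipschitzWith.of_dist_le_mul
  intro x y
  rw [NNReal.coe_one, one_mul, dist_pi_le_iff dist_nonneg]
  intro j
  rw [EuclideanSpace.dist_eq]
  apply Real.le_sqrt_of_sq_le
  exact Finset.single_le_sum (f := fun k => dist (x k) (y k) ^ 2) (fun k _ => sq_nonneg _)
    (Finset.mem_univ (i.succAbove j))

/-- linear embedding -/
def emb {m : ℕ} (i : Fin (m + 1)) : (Fin m → ℝ) →ₗ[ℝ] Euc (m + 1) where
  toFun z := WithLp.toLp 2 (i.insertNth (α := fun _ => ℝ) 0 z)
  map_add' x y := by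
    ext k
    refine Fin.succAboveCases i ?_ (fun j => ?_) k <;> simp
  map_smul' c x := by
    ext k
    refine Fin.succAboveCases i ?_ (fun j => ?_) k <;> simp

lemma emb_prj {m : ℕ} (i : Fin (m + 1)) (x : Euc (m + 1)) :
    emb i (prj i x) = x - x i • eB i := by
  ext k
  refine Fin.succAboveCases i ?_ (fun j => ?_) k <;> simp [emb, prj, eB]

/-- affine section over the hyperplane `l = 0` -/
def secA {m : ℕ} (l : Euc (m + 1) →ᵃ[ℝ] ℝ) (i : Fin (m + 1)) :
    (Fin m → ℝ) →ᵃ[ℝ] Euc (m + 1) :=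
  (emb i).toAffineMap -
    (LinearMap.toSpanSingleton ℝ (Euc (m + 1)) ((l.linear (eB i))⁻¹ • eB i)).toAffineMap.comp
      (l.comp (emb i).toAffineMap)

lemma secA_apply {m : ℕ} (l : Euc (m + 1) →ᵃ[ℝ] ℝ) (i : Fin (m + 1)) (z : Fin m → ℝ) :
    secA l i z = emb i z - (l (emb i z)) • ((l.linear (eB i))⁻¹ • eB i) := by
  simp [secA]

lemma secA_prj {m : ℕ} (l : Euc (m + 1) →ᵃ[ℝ] ℝ) (i : Fin (m + 1)) (h : l.linear (eB i) ≠ 0)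
    (x : Euc (m + 1)) (t : ℝ) (hx : l (x + t • eB i) = 0) : secA l i (prj i x) = x + t • eB i := by
  rw [secA_apply, emb_prj]
  have h1 : l (x - x i • eB i) = - (x i + t) * l.linear (eB i) := by
    have := aff_add l (x - x i • eB i) ((x i + t) • eB i)
    rw [show x - x i • eB i + (x i + t) • eB i = x + t • eB i by module, hx, map_smul, smul_eq_mul] at this
    linarith
  rw [h1, smul_smul, mul_assoc, mul_inv_cancel₀ h]
  module

lemma secA_prj_of_mem {m : ℕ} (l : Euc (m + 1) →ᵃ[ℝ] ℝ) (i : Fin (m + 1)) (h : l.linear (eB i) ≠ 0)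
    (x : Euc (m + 1)) (hx : l x = 0) : secA l i (prj i x) = x := by
  have := secA_prj l i h x 0 (by simpa using hx)
  simpa using this

lemma exists_lin_ne {n : ℕ} (l : Euc n →ᵃ[ℝ] ℝ) (h : l.linear ≠ 0) : ∃ i, l.linear (eB i) ≠ 0 := by
  by_contra! hc
  apply h
  apply (EuclideanSpace.basisFun (Fin n) ℝ).toBasis.ext
  intro i
  simpa [eB] using hc i

lemma haus_pi (m : ℕ) : (Measure.hausdorffMeasure (((m + 1 : ℕ) : ℝ) - 1) : Measure (Fin m → ℝ)) = volume := by
  rw [← hausdorffMeasure_pi_real]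
  congr 1
  simp

lemma secA_lip {m : ℕ} (l : Euc (m + 1) →ᵃ[ℝ] ℝ) (i : Fin (m + 1)) :
    ∃ C, LipschitzWith C (secA l i) := by
  refine ⟨‖LinearMap.toContinuousLinearMap (secA l i).linear‖₊, ?_⟩
  apply LipschitzWith.of_dist_le_mul
  intro x y
  rw [dist_eq_norm, dist_eq_norm]
  have := (secA l i).linearMap_vsub x y
  rw [vsub_eq_sub, vsub_eq_sub] at this
  rw [← this]
  exact (LinearMap.toContinuousLinearMap (secA l i).linear).le_opNorm _

lemma haus_face_lt_top {m : ℕ} {P : Set (Euc (m + 1))} (hP : IsCompact P)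
    (l : Euc (m + 1) →ᵃ[ℝ] ℝ) (hl : l.linear ≠ 0) :
    Measure.hausdorffMeasure (((m + 1 : ℕ) : ℝ) - 1) {y ∈ P | l y = 0} < ⊤ := by
  obtain ⟨i, hi⟩ := exists_lin_ne l hl
  obtain ⟨C, hC⟩ := secA_lip l i
  have hsub : {y ∈ P | l y = 0} ⊆ secA l i '' (prj i '' P) := by
    rintro y ⟨hy, hy0⟩
    exact ⟨_, ⟨y, hy, rfl⟩, secA_prj_of_mem l i hi y hy0⟩
  refine (measure_mono hsub).trans_lt ?_
  refine (hC.hausdorffMeasure_image_le (by simp) _).trans_lt ?_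
  rw [haus_pi]
  have hcpt : IsCompact (prj i '' P) := hP.image (prj_lip i).continuous
  exact ENNReal.mul_lt_top (by simp) hcpt.measure_lt_top

lemma lintegral_sec_le {m : ℕ} {P : Set (Euc (m + 1))} (hP : IsClosed P)
    (l : Euc (m + 1) →ᵃ[ℝ] ℝ) (i : Fin (m + 1)) (hl : l.linear (eB i) ≠ 0)
    (g : Euc (m + 1) → ℝ≥0∞) :
    ∫⁻ z, P.indicator g (secA l i z) ≤
      ∫⁻ y in {y ∈ P | l y = 0}, g y ∂(Measure.hausdorffMeasure (((m + 1 : ℕ) : ℝ) - 1)) := by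
  set F := {y ∈ P | l y = 0} with hF
  have hlc : Continuous l := l.continuous_of_finiteDimensional
  have hFm : MeasurableSet F := (hP.inter (isClosed_singleton.preimage hlc)).measurableSet
  have hsc : Continuous (secA l i) := (secA l i).continuous_of_finiteDimensional
  have hprjm : Measurable (prj i) := (prj_lip i).continuous.measurable
  -- prj (sec z) = z
  have hps : ∀ z, prj i (secA l i z) = z := by
    intro z
    rw [secA_apply]
    ext j
    simp [prj, emb, eB]
  have hls : ∀ z, l (secA l i z) = 0 := by
    intro z
    rw [secA_apply, sub_eq_add_neg, aff_add]
    simp [hl]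
  have hle : (volume : Measure (Fin m → ℝ)).restrict (secA l i ⁻¹' P) ≤
      ((Measure.hausdorffMeasure (((m + 1 : ℕ) : ℝ) - 1)).restrict F).map (prj i) := by
    rw [Measure.le_iff]
    intro B hB
    rw [Measure.map_apply hprjm hB, Measure.restrict_apply hB, Measure.restrict_apply (hprjm hB),
      ← haus_pi]
    have := (prj_lip i).hausdorffMeasure_image_le (d := (((m + 1 : ℕ) : ℝ) - 1)) (by simp)
      (prj i ⁻¹' B ∩ F)
    simp only [ENNReal.coe_one, ENNReal.one_rpow, one_mul] at this
    refine le_trans (measure_mono ?_) this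
    rintro z ⟨hzB, hzP⟩
    exact ⟨secA l i z, ⟨by simpa [hps] using hzB, hzP, hls z⟩, hps z⟩
  calc ∫⁻ z, P.indicator g (secA l i z)
      = ∫⁻ z in secA l i ⁻¹' P, P.indicator g (secA l i z) := by
        rw [← lintegral_indicator (hsc.measurable hP.measurableSet)]
        congr 1
        ext z
        by_cases h : secA l i z ∈ P <;> simp [Set.indicator, h]
    _ ≤ ∫⁻ z, P.indicator g (secA l i z) ∂(((Measure.hausdorffMeasure (((m + 1 : ℕ) : ℝ) - 1)).restrict F).map (prj i)) :=
        lintegral_mono' hle le_rfl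
    _ ≤ ∫⁻ y in F, P.indicator g (secA l i (prj i y)) ∂(Measure.hausdorffMeasure (((m + 1 : ℕ) : ℝ) - 1)) :=
        lintegral_map_le _ _
    _ = ∫⁻ y in F, g y ∂(Measure.hausdorffMeasure (((m + 1 : ℕ) : ℝ) - 1)) := by
        apply setLIntegral_congr_fun hFm
        intro y hy
        simp only
        rw [secA_prj_of_mem l i hl y hy.2, Set.indicator_of_mem hy.1]

lemma lsc_meas {n : ℕ} {P : Set (Euc n)} (hP : IsClosed P) {u : Euc n → ℝ≥0∞}
    (hu : LowerSemicontinuousOn u P) : Measurable (P.indicator u) := by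
  have h1 : Measurable (P.domRestrict u) := (lowerSemicontinuous_restrict_iff.2 hu).measurable
  classical
  apply measurable_of_restrict_of_restrict_compl hP.measurableSet
  · convert h1 using 1
    ext x
    simp [Set.domRestrict]
  · convert (measurable_const : Measurable (fun _ : (Pᶜ : Set (Euc n)) => (0 : ℝ≥0∞))) using 1
    ext x
    have := x.2
    simp only [Set.mem_compl_iff] at this
    simp [Set.domRestrict, this]

lemma polytope_convex {n : ℕ} {P : Set (Euc n)} (hP : IsPolytope P) : Convex ℝ P := by
  obtain ⟨-, -, m, L, -, rfl⟩ := hP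
  apply convex_iInter
  intro k
  exact (convex_Ici (0 : ℝ)).affine_preimage (L k)

lemma exists_frontier {n : ℕ} {P : Set (Euc n)} (hP : IsCompact P) {x : Euc n} (hx : x ∈ P)
    (e : Euc n) (he : e ≠ 0) : ∃ t : ℝ, 0 ≤ t ∧ x + t • e ∈ frontier P := by
  have hr : ∃ R : ℝ, 0 ≤ R ∧ x + R • e ∉ P := by
    by_contra! hc
    obtain ⟨C, hC⟩ := hP.isBounded.exists_norm_le
    have hC0 : 0 ≤ C := (norm_nonneg _).trans (hC x hx)
    have hne : 0 < ‖e‖ := norm_pos_iff.2 he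
    have h1 := hC _ (hc ((2 * C + 1) / ‖e‖) (by positivity))
    have h2 := hC x hx
    have h3 : ‖((2 * C + 1) / ‖e‖) • e‖ = 2 * C + 1 := by
      rw [norm_smul, Real.norm_of_nonneg (by positivity)]
      field_simp
    have h4 := norm_sub_le (x + ((2 * C + 1) / ‖e‖) • e) x
    rw [add_sub_cancel_left, h3] at h4
    linarith
  obtain ⟨R, hR0, hR⟩ := hr
  have hc : IsPreconnected ((fun t : ℝ => x + t • e) '' Set.Icc 0 R) :=
    isPreconnected_Icc.image _ (by fun_prop)
  by_contra! hcon
  have hint : ∀ t : ℝ, 0 ≤ t → x + t • e ∈ P → x + t • e ∈ interior P := by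
    intro t ht htP
    by_contra hni
    exact hcon t ht ⟨subset_closure htP, hni⟩
  obtain ⟨y, -, hy1, hy2⟩ := hc (interior P) Pᶜ isOpen_interior hP.isClosed.isOpen_compl
    (by
      rintro _ ⟨t, ht, rfl⟩
      by_cases h : x + t • e ∈ P
      · exact Or.inl (hint t ht.1 h)
      · exact Or.inr h)
    ⟨x, ⟨0, ⟨le_rfl, hR0⟩, by simp⟩, by simpa using hint 0 le_rfl (by simpa using hx)⟩
    ⟨_, ⟨R, ⟨hR0, le_rfl⟩, rfl⟩, hR⟩
  exact hy2 (interior_subset hy1)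

def vfun {m : ℕ} (P : Set (Euc (m + 1))) (K : Finset (Euc (m + 1) →ᵃ[ℝ] ℝ))
    (u : Euc (m + 1) → ℝ≥0∞) (i : Fin (m + 1)) (z : Fin m → ℝ) : ℝ≥0∞ :=
  open Classical in
  ∑ l ∈ K.filter (fun l => l.linear (eB i) ≠ 0), P.indicator u (secA l i z)

lemma u_le_vfun {m : ℕ} {P : Set (Euc (m + 1))} (hP : IsCompact P)
    (K : Finset (Euc (m + 1) →ᵃ[ℝ] ℝ)) (hK : ∀ l ∈ K, ∀ x ∈ interior P, 0 < l x)
    (hKf : ∀ y ∈ frontier P, ∃ l ∈ K, l y = 0) (u : Euc (m + 1) → ℝ≥0∞) (hu : LogConvexOn P u)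
    (i : Fin (m + 1)) (x : Euc (m + 1)) (hx : x ∈ interior P) : u x ≤ vfun P K u i (prj i x) := by
  classical
  have hxP := interior_subset hx
  have he : (eB i : Euc (m + 1)) ≠ 0 := by
    intro h
    have := congrArg (fun y : Euc (m + 1) => y i) h
    simp [eB] at this
  have key : ∀ t : ℝ, x + t • eB i ∈ frontier P →
      t ≠ 0 ∧ u (x + t • eB i) ≤ vfun P K u i (prj i x) := by
    intro t ht
    obtain ⟨l, hl, hl0⟩ := hKf _ ht
    have hlx := hK l hl x hx
    have h1 := hl0
    rw [aff_add, map_smul, smul_eq_mul] at h1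
    have ht0 : t ≠ 0 := by rintro rfl; simp at h1; linarith
    have hli : l.linear (eB i) ≠ 0 := by intro h; rw [h] at h1; simp at h1; linarith
    refine ⟨ht0, ?_⟩
    have h2 := secA_prj l i hli x t hl0
    have h3 : u (x + t • eB i) = P.indicator u (secA l i (prj i x)) := by
      rw [h2, Set.indicator_of_mem (hP.isClosed.frontier_subset ht)]
    rw [h3]
    exact Finset.single_le_sum (f := fun l => P.indicator u (secA l i (prj i x)))
      (fun _ _ => zero_le) (Finset.mem_filter.2 ⟨hl, hli⟩)
  obtain ⟨a, ha, haf⟩ := exists_frontier hP hxP (eB i) he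
  obtain ⟨b, hb, hbf⟩ := exists_frontier hP hxP (-eB i) (neg_ne_zero.2 he)
  rw [smul_neg, ← neg_smul] at hbf
  obtain ⟨ha0, hau⟩ := key a haf
  obtain ⟨hb0, hbu⟩ := key (-b) hbf
  have ha' : 0 < a := lt_of_le_of_ne ha ha0.symm
  have hb' : 0 < b := lt_of_le_of_ne hb (by intro h; simp [← h] at hb0)
  have hab : 0 < a + b := by linarith
  have ht1 : b / (a + b) ≤ 1 := by rw [div_le_one hab]; linarith
  have hcv := hu (hP.isClosed.frontier_subset hbf) (hP.isClosed.frontier_subset haf)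
    (t := b / (a + b)) (by positivity) ht1
  have hxe : (1 - b / (a + b)) • (x + (-b) • (eB i : Euc (m + 1))) + (b / (a + b)) • (x + a • eB i) = x := by
    have : -(1 - b / (a + b)) * b + b / (a + b) * a = 0 := by field_simp; ring
    calc _ = x + (-(1 - b / (a + b)) * b + b / (a + b) * a) • (eB i : Euc (m + 1)) := by module
      _ = x := by rw [this]; simp
  rw [hxe] at hcv
  refine hcv.trans ?_
  calc _ ≤ vfun P K u i (prj i x) ^ (1 - b / (a + b)) * vfun P K u i (prj i x) ^ (b / (a + b)) := by
        gcongr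
    _ = vfun P K u i (prj i x) := by
        rw [← ENNReal.rpow_add_of_nonneg _ _ (by linarith) (by positivity)]
        simp

lemma vfun_meas {m : ℕ} {P : Set (Euc (m + 1))}
    (K : Finset (Euc (m + 1) →ᵃ[ℝ] ℝ)) (u : Euc (m + 1) → ℝ≥0∞) (hu : Measurable (P.indicator u))
    (i : Fin (m + 1)) : Measurable (vfun P K u i) := by
  classical
  unfold vfun
  apply Finset.measurable_fun_sum
  intro l _
  exact hu.comp (secA l i).continuous_of_finiteDimensional.measurable

lemma vfun_int {m : ℕ} {P : Set (Euc (m + 1))} (hP : IsClosed P)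
    (K : Finset (Euc (m + 1) →ᵃ[ℝ] ℝ)) (u : Euc (m + 1) → ℝ≥0∞) (hu : Measurable (P.indicator u))
    (hfin : ∀ l ∈ K, ∫⁻ y in {y ∈ P | l y = 0}, u y ∂(Measure.hausdorffMeasure (((m + 1 : ℕ) : ℝ) - 1)) < ⊤)
    (i : Fin (m + 1)) : ∫⁻ z, vfun P K u i z < ⊤ := by
  classical
  unfold vfun
  rw [lintegral_finsetSum]
  · rw [ENNReal.sum_lt_top]
    intro l hl
    rw [Finset.mem_filter] at hl
    exact (lintegral_sec_le hP l i hl.2 u).trans_lt (hfin l hl.1)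
  · intro l _
    exact hu.comp (secA l i).continuous_of_finiteDimensional.measurable

lemma exists_marg {m : ℕ} {P : Set (Euc (m + 1))} (hP : IsCompact P)
    (K : Finset (Euc (m + 1) →ᵃ[ℝ] ℝ)) (hK : ∀ l ∈ K, ∀ x ∈ interior P, 0 < l x)
    (hKf : ∀ y ∈ frontier P, ∃ l ∈ K, l y = 0) (u : Euc (m + 1) → ℝ≥0∞) (hu : LogConvexOn P u)
    (hum : Measurable (P.indicator u))
    (hfin : ∀ l ∈ K, ∫⁻ y in {y ∈ P | l y = 0}, u y ∂(Measure.hausdorffMeasure (((m + 1 : ℕ) : ℝ) - 1)) < ⊤) :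
    ∃ f : (Fin (m + 1) → ℝ) → ℝ≥0∞, Measurable f ∧ ∫⁻ x, f x < ⊤ ∧
      ∀ x ∈ interior P, ∀ i, u x ≤ ∫⁻ t, f (Function.update x.ofLp i t) := by
  obtain ⟨C, hC⟩ := hP.isBounded.exists_norm_le
  set R : ℝ := max C 1
  have hR1 : 1 ≤ R := le_max_right _ _
  have hxR : ∀ x ∈ P, ∀ i, x i ∈ Set.Icc (-R) R := by
    intro x hx i
    have h1 : |x i| ≤ R := (PiLp.norm_apply_le x i).trans ((hC x hx).trans (le_max_left _ _))
    exact abs_le.1 h1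
  set I : Set ℝ := Set.Icc (-R) R
  set J : Set (Fin m → ℝ) := Set.univ.pi fun _ => I
  have hIm : MeasurableSet I := measurableSet_Icc
  have hJm : MeasurableSet J := MeasurableSet.univ_pi fun _ => hIm
  let h : Fin (m + 1) → (Fin (m + 1) → ℝ) → ℝ≥0∞ := fun i x =>
    I.indicator (fun _ => 1) (x i) * vfun P K u i (i.removeNth x)
  have hrm : ∀ i : Fin (m + 1), Measurable fun x : Fin (m + 1) → ℝ => i.removeNth x := by
    intro i
    rw [measurable_pi_iff]
    intro j
    exact measurable_pi_apply _
  have hm : ∀ i, Measurable (h i) := by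
    intro i
    apply Measurable.mul
    · exact (measurable_const.indicator hIm).comp (measurable_pi_apply i)
    · exact (vfun_meas K u hum i).comp (hrm i)
  refine ⟨fun x => ∑ i, h i x, Finset.measurable_fun_sum _ fun i _ => hm i, ?_, ?_⟩
  · rw [lintegral_finsetSum _ fun i _ => hm i, ENNReal.sum_lt_top]
    intro i _
    have hmp := volume_preserving_piFinSuccAbove (fun _ : Fin (m + 1) => ℝ) i
    have h1 : ∫⁻ x, h i x = ∫⁻ q : ℝ × (Fin m → ℝ), I.indicator (fun _ => 1) q.1 * vfun P K u i q.2 :=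
      hmp.lintegral_comp_emb (MeasurableEquiv.measurableEmbedding _)
        (fun q : ℝ × (Fin m → ℝ) => I.indicator (fun _ => 1) q.1 * vfun P K u i q.2)
    rw [h1, Measure.volume_eq_prod, lintegral_prod_mul (measurable_const.indicator hIm).aemeasurable
      (vfun_meas K u hum i).aemeasurable]
    apply ENNReal.mul_lt_top
    · rw [lintegral_indicator hIm]
      simp [I]
    · exact vfun_int hP.isClosed K u hum hfin i
  · intro x hx i
    calc u x ≤ vfun P K u i (prj i x) := u_le_vfun hP K hK hKf u hu i x hx
      _ ≤ volume I * vfun P K u i (prj i x) := by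
        apply le_mul_of_one_le_left zero_le
        simp only [I, Real.volume_Icc]
        rw [ENNReal.one_le_ofReal]; linarith
      _ = ∫⁻ t, I.indicator (fun _ => 1) t * vfun P K u i (prj i x) := by
        rw [lintegral_mul_const _ (measurable_const.indicator hIm), lintegral_indicator hIm]
        simp
      _ ≤ _ := by
        apply lintegral_mono
        intro t
        have h2 : I.indicator (fun _ => 1) t * vfun P K u i (prj i x) = h i (Function.update x.ofLp i t) := by
          simp only [h, Function.update_self, Fin.removeNth_update]
          rfl
        simp only
        rw [h2]
        exact Finset.single_le_sum (f := fun k => h k (Function.update x.ofLp i t)) (fun _ _ => zero_le) (Finset.mem_univ i)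

lemma xlogx_ge {y : ℝ} (hy : 0 ≤ y) : y - 1 ≤ y * Real.log y := by
  rcases hy.eq_or_lt with h | h
  · rw [← h]; norm_num
  · have h1 := mul_le_mul_of_nonneg_left (Real.one_sub_inv_le_log_of_pos h) hy
    have h2 : y * (1 - y⁻¹) = y - 1 := by field_simp
    linarith

lemma ent_vol_fin {m : ℕ} {P : Set (Euc (m + 1))} (hP : IsCompact P) (hPc : Convex ℝ P)
    (u : Euc (m + 1) → ℝ≥0∞) (f : (Fin (m + 1) → ℝ) → ℝ≥0∞) (hf : Measurable f)
    (hfi : ∫⁻ x, f x < ⊤)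
    (hfu : ∀ x ∈ interior P, ∀ i, u x ≤ ∫⁻ t, f (Function.update x.ofLp i t)) :
    ∫⁻ x in P, ENNReal.ofReal (xlogx (u x)) < ⊤ := by
  have hfr : volume (frontier P) = 0 := hPc.addHaar_frontier volume
  have hae : (interior P : Set (Euc (m + 1))) =ᵐ[volume] P := interior_ae_eq_of_null_frontier hfr
  rw [← setLIntegral_congr hae]
  have hvol : volume (interior P) < ⊤ := (measure_mono interior_subset).trans_lt hP.measure_lt_top
  rcases Nat.eq_zero_or_pos m with rfl | hm
  · -- dimension one: u bounded
    have hb : ∀ x ∈ interior P, u x ≤ ∫⁻ x, f x := by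
      intro x hx
      refine (hfu x hx 0).trans_eq ?_
      have hmp := (volume_preserving_funUnique (Fin 1) ℝ).symm
      refine Eq.trans ?_ (hmp.lintegral_comp_emb (MeasurableEquiv.measurableEmbedding _) f)
      congr 1
      ext t
      congr 1
      ext k
      fin_cases k
      simp
    set C := ∫⁻ x, f x
    have hxl : ∀ x ∈ interior P, ENNReal.ofReal (xlogx (u x)) ≤ ENNReal.ofReal (C.toReal * C.toReal) := by
      intro x hx
      apply ENNReal.ofReal_le_ofReal
      have h1 : (u x).toReal ≤ C.toReal := ENNReal.toReal_mono hfi.ne (hb x hx)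
      have h0 : 0 ≤ (u x).toReal := ENNReal.toReal_nonneg
      have h2 := Real.log_le_self h0
      unfold xlogx
      calc _ ≤ (u x).toReal * (u x).toReal := mul_le_mul_of_nonneg_left h2 h0
        _ ≤ _ := mul_self_le_mul_self h0 h1
    refine (setLIntegral_mono' isOpen_interior.measurableSet hxl).trans_lt ?_
    rw [setLIntegral_const]
    exact ENNReal.mul_lt_top ENNReal.ofReal_lt_top hvol
  · have hm' : (0 : ℝ) < m := by exact_mod_cast hm
    set p : ℝ := (m + 1) / m with hp
    have hconj : Real.HolderConjugate (Fintype.card (Fin (m + 1)) : ℝ) p := by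
      rw [Real.holderConjugate_iff]
      simp only [Fintype.card_fin, Nat.cast_add, Nat.cast_one, hp]
      refine ⟨by linarith, ?_⟩
      field_simp
      ring
    have hGN := lintegral_prod_lintegral_pow_le (fun _ : Fin (m + 1) => (volume : Measure ℝ)) hconj hf
    have hup : ∫⁻ x in interior P, u x ^ p < ⊤ := by
      calc ∫⁻ x in interior P, u x ^ p
          ≤ ∫⁻ x in interior P, ∏ i, (∫⁻ t, f (Function.update x.ofLp i t)) ^ ((1 : ℝ) / (m : ℝ)) := by
            apply setLIntegral_mono' isOpen_interior.measurableSet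
            intro x hx
            calc u x ^ p = ∏ i : Fin (m + 1), u x ^ ((1 : ℝ) / (m : ℝ)) := by
                  rw [Finset.prod_const, ← ENNReal.rpow_natCast, ← ENNReal.rpow_mul]
                  congr 1
                  simp [hp]; field_simp
              _ ≤ _ := by
                  apply Finset.prod_le_prod' 
                  intro i _
                  exact ENNReal.rpow_le_rpow (hfu x hx i) (by positivity)
        _ ≤ ∫⁻ x : Euc (m + 1), ∏ i, (∫⁻ t, f (Function.update x.ofLp i t)) ^ ((1 : ℝ) / (m : ℝ)) :=
            setLIntegral_le_lintegral _ _
        _ = ∫⁻ x : Fin (m + 1) → ℝ, ∏ i, (∫⁻ t, f (Function.update x i t)) ^ ((1 : ℝ) / (m : ℝ)) :=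
            (PiLp.volume_preserving_ofLp (Fin (m + 1))).lintegral_comp_emb
              (MeasurableEquiv.toLp 2 _).symm.measurableEmbedding
              (fun x : Fin (m + 1) → ℝ => ∏ i, (∫⁻ t, f (Function.update x i t)) ^ ((1 : ℝ) / (m : ℝ)))
        _ ≤ (∫⁻ x, f x) ^ p := by
            simpa [volume_pi] using hGN
        _ < ⊤ := ENNReal.rpow_lt_top_of_nonneg (by positivity) hfi.ne
    have hpt : ∀ x, ENNReal.ofReal (xlogx (u x)) ≤ ENNReal.ofReal m * u x ^ p := by
      intro x
      by_cases hx : u x = ⊤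
      · simp [xlogx, hx]
      have h0 : 0 ≤ (u x).toReal := ENNReal.toReal_nonneg
      have h1 := Real.log_le_rpow_div h0 (ε := 1 / m) (by positivity)
      have h2 : xlogx (u x) ≤ m * (u x).toReal ^ p := by
        unfold xlogx
        calc _ ≤ (u x).toReal * ((u x).toReal ^ (1 / m : ℝ) / (1 / m)) := mul_le_mul_of_nonneg_left h1 h0
          _ = m * ((u x).toReal ^ (1 : ℝ) * (u x).toReal ^ (1 / m : ℝ)) := by rw [Real.rpow_one]; field_simp
          _ = _ := by
            rw [← Real.rpow_add_of_nonneg h0 (by norm_num) (by positivity)]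
            congr 2
            rw [hp]; field_simp
      refine (ENNReal.ofReal_le_ofReal h2).trans_eq ?_
      rw [ENNReal.ofReal_mul hm'.le, ← ENNReal.ofReal_rpow_of_nonneg h0 (by positivity), ENNReal.ofReal_toReal hx]
    refine (lintegral_mono hpt).trans_lt ?_
    rw [lintegral_const_mul' _ _ ENNReal.ofReal_ne_top]
    exact ENNReal.mul_lt_top ENNReal.ofReal_lt_top hup

section sys
variable {n : ℕ} (S : NSystem n)

lemma mu_fin : S.μ S.P < ⊤ := by
  obtain ⟨c, hc, h⟩ := S.flat
  rw [h]
  simp only [Measure.smul_apply, smul_eq_mul]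
  refine ENNReal.mul_lt_top ENNReal.ofReal_lt_top ?_
  exact (Measure.restrict_apply_le _ _).trans_lt S.simple.1.1.measure_lt_top

lemma mu_pos : 0 < S.μ S.P := by
  obtain ⟨c, hc, h⟩ := S.flat
  have h1 : 0 < volume S.P := Measure.measure_pos_of_nonempty_interior _ S.simple.1.2.1
  rw [h]
  simp [hc, h1.ne', pos_iff_ne_zero]

lemma sigma_fin : S.σ (frontier S.P) < ⊤ := by
  obtain ⟨K, hK, hKf⟩ := exists_facets S.simple.1
  have hsub : frontier S.P ⊆ ⋃ l ∈ K, {y ∈ S.P | l y = 0} := by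
    intro y hy
    obtain ⟨l, hl, h0⟩ := hKf y hy
    exact Set.mem_biUnion hl ⟨S.simple.1.1.isClosed.frontier_subset hy, h0⟩
  refine (measure_mono hsub).trans_lt ?_
  refine (measure_biUnion_finset_le _ _).trans_lt ?_
  rw [ENNReal.sum_lt_top]
  intro l hl
  obtain ⟨hF, -, hlin⟩ := hK l hl
  obtain ⟨c, hc, h⟩ := S.flat_bdry _ hF
  have h1 := congrArg (fun ν : Measure (Euc n) => ν Set.univ) h
  simp only [Measure.restrict_apply_univ, Measure.smul_apply, smul_eq_mul] at h1
  rw [h1]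
  refine ENNReal.mul_lt_top ENNReal.ofReal_lt_top ?_
  cases n with
  | zero => exact absurd hF.2 (by omega)
  | succ m => exact haus_face_lt_top S.simple.1.1 l hlin

lemma face_sub_frontier {P : Set (Euc n)} (l : Euc n →ᵃ[ℝ] ℝ) (h : ∀ x ∈ interior P, 0 < l x) :
    {y ∈ P | l y = 0} ⊆ frontier P := by
  rintro y ⟨hy, h0⟩
  refine ⟨subset_closure hy, fun hi => ?_⟩
  have := h y hi
  linarith

lemma ent_fin (u : Euc n → ℝ≥0∞) (hu : u ∈ MExp S 1) (hU : Upf S u < ⊤) :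
    ∫⁻ x in S.P, ENNReal.ofReal (xlogx (u x)) ∂S.μ < ⊤ := by
  obtain ⟨hlsc, -, hlog, -, -⟩ := hu
  have hPc := S.simple.1.1
  have hUi : ∫⁻ x in frontier S.P, u x ∂S.σ < ⊤ := by
    by_contra hcon
    rw [not_lt, top_le_iff] at hcon
    rw [Upf, hcon, ENNReal.mul_top (ENNReal.inv_ne_zero.2 (mu_fin S).ne)] at hU
    exact lt_irrefl _ hU
  have hvol : ∫⁻ x in S.P, ENNReal.ofReal (xlogx (u x)) < ⊤ := by
    cases n with
    | zero =>
      have : ∀ x, ENNReal.ofReal (xlogx (u x)) = ENNReal.ofReal (xlogx (u 0)) := fun x => by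
        rw [Subsingleton.elim x 0]
      simp_rw [this]
      rw [setLIntegral_const]
      exact ENNReal.mul_lt_top ENNReal.ofReal_lt_top hPc.measure_lt_top
    | succ m =>
      obtain ⟨K, hK, hKf⟩ := exists_facets S.simple.1
      have hfin : ∀ l ∈ K, ∫⁻ y in {y ∈ S.P | l y = 0}, u y ∂(Measure.hausdorffMeasure (((m + 1 : ℕ) : ℝ) - 1)) < ⊤ := by
        intro l hl
        obtain ⟨hF, hpos, -⟩ := hK l hl
        obtain ⟨c, hc, h⟩ := S.flat_bdry _ hF
        have h1 : ∫⁻ y in {y ∈ S.P | l y = 0}, u y ∂S.σ < ⊤ :=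
          (lintegral_mono_set (face_sub_frontier l hpos)).trans_lt hUi
        rw [h, lintegral_smul_measure, smul_eq_mul] at h1
        by_contra hcon
        rw [not_lt, top_le_iff] at hcon
        rw [hcon, ENNReal.mul_top (by simpa using hc)] at h1
        exact lt_irrefl _ h1
      obtain ⟨f, hf, hfi, hfu⟩ := exists_marg hPc K (fun l hl => (hK l hl).2.1) hKf u hlog
        (lsc_meas hPc.isClosed hlsc) hfin
      exact ent_vol_fin hPc (polytope_convex S.simple.1) u f hf hfi hfu
  obtain ⟨c, hc, h⟩ := S.flat
  rw [h, Measure.restrict_smul, Measure.restrict_restrict hPc.measurableSet, Set.inter_self,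
    lintegral_smul_measure, smul_eq_mul]
  exact ENNReal.mul_lt_top ENNReal.ofReal_lt_top hvol

lemma one_mem : (fun _ => 1 : Euc n → ℝ≥0∞) ∈ MExp S 1 := by
  refine ⟨lowerSemicontinuousOn_const, fun _ _ => by simp, ?_, by simp, ?_⟩
  · intro x _ y _ t _ _
    simp
  · simpa using mu_fin S

lemma neg_fin (u : Euc n → ℝ≥0∞) :
    ∫⁻ x in S.P, ENNReal.ofReal (-(xlogx (u x))) ∂S.μ < ⊤ := by
  have : ∀ x, ENNReal.ofReal (-(xlogx (u x))) ≤ 1 := by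
    intro x
    rw [ENNReal.ofReal_le_one]
    unfold xlogx
    have h0 : 0 ≤ (u x).toReal := ENNReal.toReal_nonneg
    have := xlogx_ge h0
    linarith
  refine (lintegral_mono this).trans_lt ?_
  simpa using mu_fin S

lemma neg_le_pos (u : Euc n → ℝ≥0∞) (hu : u ∈ MExp S 1) :
    ∫⁻ x in S.P, ENNReal.ofReal (-(xlogx (u x))) ∂S.μ ≤
      ∫⁻ x in S.P, ENNReal.ofReal (xlogx (u x)) ∂S.μ := by
  obtain ⟨hlsc, -, -, hint, -⟩ := hu
  have hPm := S.simple.1.1.isClosed.measurableSet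
  have hm : AEMeasurable u (S.μ.restrict S.P) := by
    refine (lsc_meas S.simple.1.1.isClosed hlsc).aemeasurable.congr ?_
    filter_upwards [ae_restrict_mem hPm] with x hx
    rw [Set.indicator_of_mem hx]
  have hlt : ∀ᵐ x ∂(S.μ.restrict S.P), u x < ⊤ := ae_lt_top' hm (by rw [hint]; exact (mu_fin S).ne)
  have h1 : (∫⁻ x in S.P, ENNReal.ofReal (-(xlogx (u x))) ∂S.μ) + S.μ S.P ≤
      (∫⁻ x in S.P, ENNReal.ofReal (xlogx (u x)) ∂S.μ) + S.μ S.P := by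
    calc _ = (∫⁻ x in S.P, ENNReal.ofReal (-(xlogx (u x))) ∂S.μ) + ∫⁻ x in S.P, u x ∂S.μ := by rw [hint]
      _ ≤ ∫⁻ x in S.P, ENNReal.ofReal (-(xlogx (u x))) + u x ∂S.μ := le_lintegral_add _ _
      _ ≤ ∫⁻ x in S.P, ENNReal.ofReal (xlogx (u x)) + 1 ∂S.μ := by
        apply lintegral_mono_ae
        filter_upwards [hlt] with x hx
        have h0 : 0 ≤ (u x).toReal := ENNReal.toReal_nonneg
        have h2 : (u x).toReal - 1 ≤ xlogx (u x) := xlogx_ge h0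
        have h3 : ENNReal.ofReal (-(xlogx (u x))) + u x =
            ENNReal.ofReal (-(xlogx (u x))) + ENNReal.ofReal (u x).toReal := by
          rw [ENNReal.ofReal_toReal hx.ne]
        rw [h3]
        rcases le_total 0 (xlogx (u x)) with hs | hs
        · rw [ENNReal.ofReal_of_nonpos (by linarith : -xlogx (u x) ≤ 0), zero_add, ← ENNReal.ofReal_one,
            ← ENNReal.ofReal_add hs zero_le_one]
          exact ENNReal.ofReal_le_ofReal (by linarith)
        · rw [ENNReal.ofReal_of_nonpos hs, zero_add, ← ENNReal.ofReal_one,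
            ← ENNReal.ofReal_add (by linarith) h0]
          exact ENNReal.ofReal_le_ofReal (by linarith)
      _ = _ := by
        rw [lintegral_add_right _ measurable_const]
        simp
  exact (ENNReal.add_le_add_iff_right (mu_fin S).ne).1 h1

/-- Entropy is either `⊥` or a nonpositive real; finite for finite energy. -/
lemma spf_real (u : Euc n → ℝ≥0∞) (hu : u ∈ MExp S 1)
    (hA : ∫⁻ x in S.P, ENNReal.ofReal (xlogx (u x)) ∂S.μ < ⊤) :
    ∃ E : ℝ, 0 ≤ E ∧ Spf S u = ((-E : ℝ) : EReal) := by
  have hB := neg_fin S u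
  have hBA := neg_le_pos S u hu
  unfold Spf
  set A := ∫⁻ x in S.P, ENNReal.ofReal (xlogx (u x)) ∂S.μ
  set B := ∫⁻ x in S.P, ENNReal.ofReal (-(xlogx (u x))) ∂S.μ
  refine ⟨(S.μ S.P).toReal⁻¹ * (A.toReal - B.toReal), ?_, ?_⟩
  · have := ENNReal.toReal_mono hA.ne hBA
    have : 0 ≤ A.toReal - B.toReal := by linarith
    positivity
  · rw [← EReal.coe_ennreal_toReal hA.ne, ← EReal.coe_ennreal_toReal hB.ne]
    norm_cast
    ring

lemma spf_bot (u : Euc n → ℝ≥0∞)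
    (hA : ∫⁻ x in S.P, ENNReal.ofReal (xlogx (u x)) ∂S.μ = ⊤) : Spf S u = ⊥ := by
  unfold Spf
  rw [hA, ← EReal.coe_ennreal_toReal (neg_fin S u).ne, EReal.coe_ennreal_top, EReal.sub_top]
  apply EReal.coe_mul_bot_of_pos
  have := ENNReal.toReal_pos (mu_pos S).ne' (mu_fin S).ne
  positivity

lemma upf_one : Upf S (fun _ => 1) < ⊤ := by
  unfold Upf
  refine ENNReal.mul_lt_top (ENNReal.inv_lt_top.2 (mu_pos S)) ?_
  simpa using sigma_fin S

lemma fpf_real (u : Euc n → ℝ≥0∞) (hU : Upf S u < ⊤) {E : ℝ} (hE : Spf S u = ((-E : ℝ) : EReal))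
    (T : ℝ) : Fpf S T u = (((Upf S u).toReal + T * E : ℝ) : EReal) := by
  unfold Fpf
  rw [if_neg (by rw [hE]; exact EReal.coe_ne_bot _), hE, ← EReal.coe_ennreal_toReal hU.ne]
  norm_cast
  ring

lemma can_fin (T : ℝ) (hT : 0 ≤ T) (u : Euc n → ℝ≥0∞) (hu : IsCanonical S T u) : Upf S u < ⊤ := by
  obtain ⟨hM, h1, h0⟩ := hu
  rcases hT.eq_or_lt with h | h
  · exact ((h0 h.symm).1 _ (one_mem S)).trans_lt (upf_one S)
  · have h2 := h1 h _ (one_mem S)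
    obtain ⟨E1, -, hE1⟩ := spf_real S _ (one_mem S) (ent_fin S _ (one_mem S) (upf_one S))
    rw [fpf_real S _ (upf_one S) hE1] at h2
    have h3 : Fpf S T u < ⊤ := h2.trans_lt (EReal.coe_lt_top _)
    by_contra hcon
    rw [not_lt, top_le_iff] at hcon
    by_cases hA : ∫⁻ x in S.P, ENNReal.ofReal (xlogx (u x)) ∂S.μ = ⊤
    · rw [Fpf, if_pos (spf_bot S u hA)] at h3
      exact lt_irrefl _ h3
    · obtain ⟨E, -, hE⟩ := spf_real S u hM (lt_top_iff_ne_top.2 hA)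
      rw [Fpf, if_neg (by rw [hE]; exact EReal.coe_ne_bot _), hE, hcon, ← EReal.coe_mul,
        EReal.coe_ennreal_top, EReal.top_sub_coe] at h3
      exact lt_irrefl _ h3

end sys


/-- Monotonicity and concavity along the family of μ-canonical distributions:
`T ↦ F_𝒫(T, u_T^can)` is increasing and concave on `[0,∞)`,
`T ↦ U_𝒫(u_T^can)` and `T ↦ S_𝒫(u_T^can)` are increasing on `[0,∞)`, and
`S_𝒫(u_T^can) → 0` as `T → ∞`. -/
theorem canonical_family_monotone_concave (n : ℕ) (S : NSystem n)
    (ucan : ℝ → Euc n → ℝ≥0∞)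
    (hcan : ∀ T : ℝ, 0 ≤ T → IsCanonical S T (ucan T)) :
    MonotoneOn (fun T => Fpf S T (ucan T)) (Set.Ici (0 : ℝ)) ∧
    (∀ T0 ∈ Set.Ici (0 : ℝ), ∀ T1 ∈ Set.Ici (0 : ℝ), ∀ s : ℝ, 0 ≤ s → s ≤ 1 →
      ((1 - s : ℝ) : EReal) * Fpf S T0 (ucan T0) + ((s : ℝ) : EReal) * Fpf S T1 (ucan T1)
        ≤ Fpf S ((1 - s) * T0 + s * T1) (ucan ((1 - s) * T0 + s * T1))) ∧
    MonotoneOn (fun T => Upf S (ucan T)) (Set.Ici (0 : ℝ)) ∧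
    MonotoneOn (fun T => Spf S (ucan T)) (Set.Ici (0 : ℝ)) ∧
    Tendsto (fun T : ℝ => Spf S (ucan T)) atTop (𝓝 (0 : EReal)) := by
  have hM : ∀ T, 0 ≤ T → ucan T ∈ MExp S 1 := fun T hT => (hcan T hT).1
  have hUf : ∀ T, 0 ≤ T → Upf S (ucan T) < ⊤ := fun T hT => can_fin S T hT _ (hcan T hT)
  have hEx : ∀ T, ∃ E : ℝ, 0 ≤ T → 0 ≤ E ∧ Spf S (ucan T) = ((-E : ℝ) : EReal) := by
    intro T
    by_cases hT : 0 ≤ T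
    · obtain ⟨E, hE⟩ := spf_real S _ (hM T hT) (ent_fin S _ (hM T hT) (hUf T hT))
      exact ⟨E, fun _ => hE⟩
    · exact ⟨0, fun h => absurd h hT⟩
  choose E hE using hEx
  set U : ℝ → ℝ := fun T => (Upf S (ucan T)).toReal with hU
  have hF : ∀ T T', 0 ≤ T' → Fpf S T (ucan T') = ((U T' + T * E T' : ℝ) : EReal) :=
    fun T T' hT' => fpf_real S _ (hUf T' hT') (hE T' hT').2 T
  have hmin : ∀ T T', 0 ≤ T → 0 ≤ T' → U T + T * E T ≤ U T' + T * E T' := by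
    intro T T' hT hT'
    rcases hT.eq_or_lt with h | h
    · subst h
      simp only [zero_mul, add_zero]
      exact ENNReal.toReal_mono (hUf T' hT').ne (((hcan 0 le_rfl).2.2 rfl).1 _ (hM T' hT'))
    · have h1 := (hcan T hT).2.1 h _ (hM T' hT')
      rw [hF T T hT, hF T T' hT'] at h1
      exact_mod_cast h1
  have hEm : ∀ T T', 0 ≤ T → T ≤ T' → E T' ≤ E T := by
    intro T T' hT hTT
    rcases hTT.eq_or_lt with h | h
    · rw [h]
    have hT' : 0 ≤ T' := hT.trans hTT
    have h1 := hmin T T' hT hT'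
    have h2 := hmin T' T hT' hT
    nlinarith
  refine ⟨?_, ?_, ?_, ?_, ?_⟩
  · intro T hT T' hT' hTT
    simp only [Set.mem_Ici] at hT hT'
    simp only
    rw [hF T T hT, hF T' T' hT', EReal.coe_le_coe_iff]
    have h1 := hmin T T' hT hT'
    have h2 := mul_le_mul_of_nonneg_right hTT (hE T' hT').1
    linarith
  · intro T0 hT0 T1 hT1 s hs0 hs1
    simp only [Set.mem_Ici] at hT0 hT1
    have hs' : 0 ≤ 1 - s := by linarith
    set T := (1 - s) * T0 + s * T1 with hTdef
    have hT : 0 ≤ T := by positivity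
    rw [hF T0 T0 hT0, hF T1 T1 hT1, hF T T hT, ← EReal.coe_mul, ← EReal.coe_mul, ← EReal.coe_add,
      EReal.coe_le_coe_iff]
    have h1 := mul_le_mul_of_nonneg_left (hmin T0 T hT0 hT) hs'
    have h2 := mul_le_mul_of_nonneg_left (hmin T1 T hT1 hT) hs0
    calc _ ≤ _ := add_le_add h1 h2
      _ = _ := by rw [show U T + T * E T = U T + ((1 - s) * T0 + s * T1) * E T by rw [← hTdef]]; ring
  · intro T hT T' hT' hTT
    simp only [Set.mem_Ici] at hT hT'
    simp only
    rw [← ENNReal.toReal_le_toReal (hUf T hT).ne (hUf T' hT').ne]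
    have h1 := hmin T T' hT hT'
    have h2 := mul_le_mul_of_nonneg_left (hEm T T' hT hTT) hT
    show U T ≤ U T'
    linarith
  · intro T hT T' hT' hTT
    simp only [Set.mem_Ici] at hT hT'
    simp only
    rw [(hE T hT).2, (hE T' hT').2, EReal.coe_le_coe_iff]
    linarith [hEm T T' hT hTT]
  · obtain ⟨E1, -, hE1⟩ := spf_real S _ (one_mem S) (ent_fin S _ (one_mem S) (upf_one S))
    have hE1z : E1 = 0 := by
      have : Spf S (fun _ => 1) = 0 := by simp [Spf, xlogx]
      rw [this] at hE1
      have h : (0 : ℝ) = -E1 := by exact_mod_cast hE1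
      linarith
    set C : ℝ := (Upf S (fun _ => 1)).toReal
    have hbd : ∀ T, 0 < T → E T ≤ C / T := by
      intro T hT
      have h1 := (hcan T hT.le).2.1 hT _ (one_mem S)
      rw [hF T T hT.le, fpf_real S _ (upf_one S) hE1, EReal.coe_le_coe_iff, hE1z] at h1
      rw [le_div_iff₀ hT]
      have : 0 ≤ U T := ENNReal.toReal_nonneg
      linarith
    have hlim : Tendsto E atTop (𝓝 0) := by
      refine tendsto_of_tendsto_of_tendsto_of_le_of_le' tendsto_const_nhds
        (tendsto_const_nhds.div_atTop tendsto_id : Tendsto (fun T : ℝ => C / T) atTop (𝓝 0)) ?_ ?_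
      · filter_upwards [eventually_ge_atTop 0] with T hT using (hE T hT).1
      · filter_upwards [eventually_gt_atTop 0] with T hT using hbd T hT
    have h2 : Tendsto (fun T => ((-E T : ℝ) : EReal)) atTop (𝓝 ((-0 : ℝ) : EReal)) :=
      (continuous_coe_real_ereal.tendsto _).comp hlim.neg
    rw [neg_zero, EReal.coe_zero] at h2
    refine h2.congr' ?_
    filter_upwards [eventually_ge_atTop 0] with T hT using (hE T hT).2.symm

end
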